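/- arXiv:cs/0207086 — 2 statements merged into one kernel-verified Lean document; each statement's English description precedes it below -/
import Mathlib

section
/- Soundness of defeasible logic DL: for every propositional defeasible theory T and every conclusion c (of one of the forms +Δq, -Δq, +∂q, -∂q for a literal q), if T ⊢ c then c holds in every defeasible model of T; that is, if T ⊢ +Δq then M_Δ(q)=True in every model M of T, if T ⊢ -Δq then M_Δ(q)=False in every model, if T ⊢ +∂q then M_∂(q)=True in every model, and if T ⊢ -∂q then M_∂(q)=False in every model. -/
/-- A literal is an atom or its negation. -/
inductive Lit (Atom : Type) where
  | pos : Atom → Lit Atom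
  | neg : Atom → Lit Atom
  deriving DecidableEq

/-- The complement `~q` of a literal `q`. -/
def Lit.compl {Atom : Type} : Lit Atom → Lit Atom
  | .pos a => .neg a
  | .neg a => .pos a

/-- The three kinds of rules: strict, defeasible, defeater. -/
inductive RuleKind where
  | strict
  | defeasible
  | defeater
  deriving DecidableEq

/-- A rule: a kind, a finite set of literals as body (antecedent), and a head literal. -/
structure DRule (Atom : Type) where
  kind : RuleKind
  body : Finset (Lit Atom)
  head : Lit Atom
  deriving DecidableEq

/-- A rule is strict-or-defeasible (a "supportive" rule). -/
def DRule.isSd {Atom : Type} (r : DRule Atom) : Prop :=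
  r.kind = RuleKind.strict ∨ r.kind = RuleKind.defeasible

/-- A propositional defeasible theory: finite set of facts, finite set of rules,
and a superiority relation on rules. -/
structure DTheory (Atom : Type) where
  facts : Finset (Lit Atom)
  rules : Finset (DRule Atom)
  sup : DRule Atom → DRule Atom → Prop

/-- Acyclicity of the superiority relation. -/
def SupAcyclic {Atom : Type} (T : DTheory Atom) : Prop :=
  ∀ r : DRule Atom, ¬ Relation.TransGen T.sup r r

/-- Conclusions: tagged literals +Δq, -Δq, +∂q, -∂q. -/
inductive Concl (Atom : Type) where
  | plusDelta : Lit Atom → Concl Atom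
  | minusDelta : Lit Atom → Concl Atom
  | plusPartial : Lit Atom → Concl Atom
  | minusPartial : Lit Atom → Concl Atom
  deriving DecidableEq

/-- The inference rules of DL: `Licensed T prev c` holds when the conclusion `c`
may be appended to a derivation whose preceding part is `prev`. -/
def Licensed {Atom : Type} (T : DTheory Atom)
    (prev : List (Concl Atom)) : Concl Atom → Prop
  | .plusDelta q =>
      q ∈ T.facts ∨
      ∃ r ∈ T.rules, r.kind = RuleKind.strict ∧ r.head = q ∧
        ∀ a ∈ r.body, Concl.plusDelta a ∈ prev
  | .minusDelta q =>
      q ∉ T.facts ∧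
      ∀ r ∈ T.rules, r.kind = RuleKind.strict → r.head = q →
        ∃ a ∈ r.body, Concl.minusDelta a ∈ prev
  | .plusPartial q =>
      (Concl.plusDelta q ∈ prev) ∨
      ((∃ r ∈ T.rules, r.isSd ∧ r.head = q ∧
          ∀ a ∈ r.body, Concl.plusPartial a ∈ prev) ∧
       (Concl.minusDelta q.compl ∈ prev) ∧
       ∀ s ∈ T.rules, s.head = q.compl →
         ((∃ a ∈ s.body, Concl.minusPartial a ∈ prev) ∨
          (∃ t ∈ T.rules, t.isSd ∧ t.head = q ∧ T.sup t s ∧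
            ∀ a ∈ t.body, Concl.plusPartial a ∈ prev)))
  | .minusPartial q =>
      (Concl.minusDelta q ∈ prev) ∧
      ((∀ r ∈ T.rules, r.isSd → r.head = q →
          ∃ a ∈ r.body, Concl.minusPartial a ∈ prev) ∨
       (Concl.plusDelta q.compl ∈ prev) ∨
       (∃ s ∈ T.rules, s.head = q.compl ∧
          (∀ a ∈ s.body, Concl.plusPartial a ∈ prev) ∧
          ∀ t ∈ T.rules, t.isSd → t.head = q →
            ((∃ a ∈ t.body, Concl.minusPartial a ∈ prev) ∨ ¬ T.sup t s)))

/-- A derivation: each element of the sequence is licensed given the preceding part. -/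
def DLDerivation {Atom : Type} (T : DTheory Atom)
    (P : List (Concl Atom)) : Prop :=
  ∀ i : Fin P.length, Licensed T (P.take i) (P.get i)

/-- `T ⊢ c`: some derivation in `T` ends with conclusion `c`. -/
def DLProves {Atom : Type} (T : DTheory Atom) (c : Concl Atom) : Prop :=
  ∃ P : List (Concl Atom), DLDerivation T P ∧ P.getLast? = some c

/-- A defeasible interpretation: two partial functions from literals to booleans
(modelled as `Option Bool`-valued functions), `del` for definite knowledge (Δ) and
`par` for defeasible belief (∂). -/
structure DInterp (Atom : Type) where
  del : Lit Atom → Option Bool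
  par : Lit Atom → Option Bool

/-- The coherence conditions on defeasible interpretations: what is known is believed,
and what is not believed is not known. -/
def DInterp.Coherent {Atom : Type} (I : DInterp Atom) : Prop :=
  (∀ q : Lit Atom, I.del q = some true → I.par q = some true) ∧
  (∀ q : Lit Atom, I.par q = some false → I.del q = some false)

open Classical in
/-- Kleene conjunction of a partial boolean function over a finite set of literals:
`False` if some member maps to `False`, `True` if every member maps to `True`,
undefined otherwise. -/
noncomputable def kleeneAll {Atom : Type} (f : Lit Atom → Option Bool)
    (S : Finset (Lit Atom)) : Option Bool :=
  if ∃ a ∈ S, f a = some false then some false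
  else if ∀ a ∈ S, f a = some true then some true
  else none

/-- The four model conditions (MΔ+), (MΔ-), (M∂+), (M∂-). -/
def ModelConditions {Atom : Type} (T : DTheory Atom)
    (I : DInterp Atom) : Prop :=
  (∀ q : Lit Atom,
    I.del q = some true ↔
      (q ∈ T.facts ∨
       ∃ r ∈ T.rules, r.kind = RuleKind.strict ∧ r.head = q ∧
         kleeneAll I.del r.body = some true)) ∧
  (∀ q : Lit Atom,
    I.del q = some false ↔
      (q ∉ T.facts ∧
       ∀ r ∈ T.rules, r.kind = RuleKind.strict → r.head = q →
         kleeneAll I.del r.body = some false)) ∧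
  (∀ q : Lit Atom,
    I.par q = some true ↔
      (I.del q = some true ∨
       ((∃ r ∈ T.rules, r.isSd ∧ r.head = q ∧ kleeneAll I.par r.body = some true) ∧
        I.del q.compl = some false ∧
        ∀ s ∈ T.rules, s.head = q.compl →
          (kleeneAll I.par s.body = some false ∨
           ∃ t ∈ T.rules, t.isSd ∧ t.head = q ∧
             kleeneAll I.par t.body = some true ∧ T.sup t s)))) ∧
  (∀ q : Lit Atom,
    I.par q = some false ↔
      (I.del q = some false ∧
       ((∀ r ∈ T.rules, r.isSd → r.head = q → kleeneAll I.par r.body = some false) ∨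
        I.del q.compl = some true ∨
        (∃ s ∈ T.rules, s.head = q.compl ∧ kleeneAll I.par s.body = some true ∧
          ∀ t ∈ T.rules, t.isSd → t.head = q →
            (kleeneAll I.par t.body = some false ∨ ¬ T.sup t s)))))

/-- A defeasible model of `T`: a defeasible interpretation (coherent pair of partial
functions) satisfying the four model conditions. -/
def IsModel {Atom : Type} (T : DTheory Atom) (I : DInterp Atom) : Prop :=
  I.Coherent ∧ ModelConditions T I

/-- A conclusion holds in an interpretation. -/
def DLHolds {Atom : Type} (I : DInterp Atom) : Concl Atom → Prop
  | .plusDelta q => I.del q = some true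
  | .minusDelta q => I.del q = some false
  | .plusPartial q => I.par q = some true
  | .minusPartial q => I.par q = some false

/-!
Each inference rule of DL is one of the model conditions read from right to left, with the
occurrence of a tagged literal earlier in the derivation in place of the corresponding value of that
literal. Bodies match the Kleene conjunction: all members tagged `+` make a body true, and a single
member tagged `-` makes it false. Soundness is therefore an induction on derivations.
-/

section KleeneConjunction

variable {Atom : Type} {f : Lit Atom → Option Bool} {S : Finset (Lit Atom)}

theorem kleeneAll_eq_some_false_iff :
    kleeneAll f S = some false ↔ ∃ a ∈ S, f a = some false := by
  unfold kleeneAll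
  split_ifs with hfalse
  · exact iff_of_true rfl hfalse
  all_goals exact iff_of_false (by simp) hfalse

theorem kleeneAll_eq_some_true_iff :
    kleeneAll f S = some true ↔ ∀ a ∈ S, f a = some true := by
  unfold kleeneAll
  split_ifs with hfalse htrue
  · obtain ⟨a, ha, hfa⟩ := hfalse
    exact iff_of_false (by simp) fun h => by simp [h a ha] at hfa
  · exact iff_of_true rfl htrue
  · exact iff_of_false (by simp) htrue

end KleeneConjunction

section Derivations

variable {Atom : Type} {T : DTheory Atom} {p : Concl Atom → Prop}

theorem DLDerivation.forall_mem {P : List (Concl Atom)} (hP : DLDerivation T P)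
    (hp : ∀ prev c, (∀ d ∈ prev, p d) → Licensed T prev c → p c) : ∀ c ∈ P, p c := by
  suffices h : ∀ (n : ℕ) (hn : n < P.length), p P[n] from List.forall_mem_iff_getElem.2 h
  intro n
  induction n using Nat.strong_induction_on with
  | _ n ih =>
    intro hn
    refine hp (P.take n) P[n] (fun d hd => ?_) (hP ⟨n, hn⟩)
    obtain ⟨i, hi, rfl⟩ := List.mem_take_iff_getElem.1 hd
    exact ih i (lt_min_iff.1 hi).1 (lt_min_iff.1 hi).2

theorem DLProves.induction {c : Concl Atom} (h : DLProves T c)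
    (hp : ∀ prev c, (∀ d ∈ prev, p d) → Licensed T prev c → p c) : p c := by
  obtain ⟨P, hP, hc⟩ := h
  exact hP.forall_mem hp c (List.mem_of_getLast? hc)

end Derivations

section Soundness

variable {Atom : Type} {T : DTheory Atom} {I : DInterp Atom} {prev : List (Concl Atom)}
  {q : Lit Atom}

theorem kleeneAll_par_eq_some_true {S : Finset (Lit Atom)} (hprev : ∀ d ∈ prev, DLHolds I d)
    (hS : ∀ a ∈ S, Concl.plusPartial a ∈ prev) : kleeneAll I.par S = some true :=
  kleeneAll_eq_some_true_iff.2 fun a ha => hprev _ (hS a ha)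

theorem kleeneAll_par_eq_some_false {S : Finset (Lit Atom)} (hprev : ∀ d ∈ prev, DLHolds I d)
    (hS : ∃ a ∈ S, Concl.minusPartial a ∈ prev) : kleeneAll I.par S = some false :=
  kleeneAll_eq_some_false_iff.2 <| hS.imp fun _ => And.imp_right (hprev _)

namespace Licensed

theorem del_eq_some_true (h : Licensed T prev (.plusDelta q)) (hI : ModelConditions T I)
    (hprev : ∀ d ∈ prev, DLHolds I d) : I.del q = some true := by
  refine (hI.1 q).2 ?_
  rcases h with hfact | ⟨r, hr, hstrict, hhead, hbody⟩
  · exact .inl hfact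
  · exact .inr ⟨r, hr, hstrict, hhead,
      kleeneAll_eq_some_true_iff.2 fun a ha => hprev _ (hbody a ha)⟩

theorem del_eq_some_false (h : Licensed T prev (.minusDelta q)) (hI : ModelConditions T I)
    (hprev : ∀ d ∈ prev, DLHolds I d) : I.del q = some false := by
  obtain ⟨hfact, hrules⟩ := h
  refine (hI.2.1 q).2 ⟨hfact, fun r hr hstrict hhead => kleeneAll_eq_some_false_iff.2 ?_⟩
  exact (hrules r hr hstrict hhead).imp fun _ => And.imp_right (hprev _)

theorem par_eq_some_true (h : Licensed T prev (.plusPartial q)) (hI : ModelConditions T I)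
    (hprev : ∀ d ∈ prev, DLHolds I d) : I.par q = some true := by
  refine (hI.2.2.1 q).2 ?_
  rcases h with hdefinite | ⟨⟨r, hr, hsd, hhead, hbody⟩, hcompl, hattack⟩
  · exact .inl (hprev _ hdefinite)
  · refine .inr ⟨⟨r, hr, hsd, hhead, kleeneAll_par_eq_some_true hprev hbody⟩,
      hprev _ hcompl, fun s hs hshead => ?_⟩
    rcases hattack s hs hshead with hdiscarded | ⟨t, ht, htsd, hthead, hsup, htbody⟩
    · exact .inl (kleeneAll_par_eq_some_false hprev hdiscarded)
    · exact .inr ⟨t, ht, htsd, hthead, kleeneAll_par_eq_some_true hprev htbody, hsup⟩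

theorem par_eq_some_false (h : Licensed T prev (.minusPartial q)) (hI : ModelConditions T I)
    (hprev : ∀ d ∈ prev, DLHolds I d) : I.par q = some false := by
  obtain ⟨hdel, hrest⟩ := h
  refine (hI.2.2.2 q).2 ⟨hprev _ hdel, ?_⟩
  rcases hrest with hdiscarded | hcompl | ⟨s, hs, hshead, hsbody, hundefeated⟩
  · exact .inl fun r hr hsd hhead =>
      kleeneAll_par_eq_some_false hprev (hdiscarded r hr hsd hhead)
  · exact .inr (.inl (hprev _ hcompl))
  · exact .inr (.inr ⟨s, hs, hshead, kleeneAll_par_eq_some_true hprev hsbody,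
      fun t ht htsd hthead =>
        (hundefeated t ht htsd hthead).imp_left (kleeneAll_par_eq_some_false hprev)⟩)

theorem holds {c : Concl Atom} (h : Licensed T prev c) (hI : ModelConditions T I)
    (hprev : ∀ d ∈ prev, DLHolds I d) : DLHolds I c :=
  match c with
  | .plusDelta _ => h.del_eq_some_true hI hprev
  | .minusDelta _ => h.del_eq_some_false hI hprev
  | .plusPartial _ => h.par_eq_some_true hI hprev
  | .minusPartial _ => h.par_eq_some_false hI hprev

end Licensed

theorem DL_soundness_general {c : Concl Atom} (h : DLProves T c) (hI : ModelConditions T I) :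
    DLHolds I c :=
  h.induction fun _ _ hprev hc => hc.holds hI hprev

end Soundness

/-- Soundness of DL: every provable conclusion holds in every defeasible model. -/
theorem DL_soundness {Atom : Type} [Countable Atom] [DecidableEq Atom]
    (T : DTheory Atom) (hacyc : SupAcyclic T) (c : Concl Atom)
    (h : DLProves T c) :
    ∀ I : DInterp Atom, IsModel T I → DLHolds I c := by
  exact fun I hI => DL_soundness_general h hI.2
end

section
/- Characterization of definite non-provability: for every propositional defeasible theory T and literal q, T ⊢ -Δq if and only if M_Δ(q)=False for every defeasible model M of T. -/
/-!
The inference rules define a monotone operator on sets of conclusions. Since rule bodies and the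
rule set are finite, the provable conclusions are its least fixed point, while Kleene's truth
tables make the models of a theory exactly the fixed points that come from an interpretation.
Hence soundness is the minimality of the least fixed point, and completeness holds as soon as the
least fixed point is itself a model, that is, contains no pair of opposite conclusions. The rules
for the negative tags are the negations of those for the positive tags (the *principle of strong
negation*), so the operator commutes with the duality sending a set to the conclusions whose
opposite it lacks. The dual of the least fixed point is therefore a fixed point, and it contains
the least one: this is consistency.
-/

section

variable {Atom : Type}

namespace Concl

/-- The literal that a conclusion is about. -/
def lit : Concl Atom → Lit Atom
  | .plusDelta q | .minusDelta q | .plusPartial q | .minusPartial q => q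

/-- The conclusion with the same literal and level and the other sign. -/
def opposite : Concl Atom → Concl Atom
  | .plusDelta q => .minusDelta q
  | .minusDelta q => .plusDelta q
  | .plusPartial q => .minusPartial q
  | .minusPartial q => .plusPartial q

/-- The strong-negation dual of a set of conclusions. A set is consistent exactly when it is
contained in its dual. -/
def dual (X : Set (Concl Atom)) : Set (Concl Atom) :=
  {c | c.opposite ∉ X}

protected theorem forall_iff {p : Concl Atom → Prop} :
    (∀ c, p c) ↔ (∀ q, p (.plusDelta q)) ∧ (∀ q, p (.minusDelta q)) ∧
      (∀ q, p (.plusPartial q)) ∧ ∀ q, p (.minusPartial q) :=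
  ⟨fun h => ⟨fun _ => h _, fun _ => h _, fun _ => h _, fun _ => h _⟩,
    fun ⟨hpd, hmd, hpp, hmp⟩ c => c.rec hpd hmd hpp hmp⟩

theorem finite_lit_preimage_singleton (q : Lit Atom) : (lit ⁻¹' {q}).Finite := by
  refine (Set.toFinite {plusDelta q, minusDelta q, plusPartial q, minusPartial q}).subset ?_
  rintro (p | p | p | p) (rfl : p = q) <;> simp

end Concl

/-- `Infers T X c`: the conclusion `c` follows by one inference rule of `T` from conclusions in
`X`. This is `Licensed` for a possibly infinite set of available conclusions. -/
def Infers (T : DTheory Atom) (X : Set (Concl Atom)) : Concl Atom → Prop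
  | .plusDelta q =>
      q ∈ T.facts ∨
      ∃ r ∈ T.rules, r.kind = RuleKind.strict ∧ r.head = q ∧
        ∀ a ∈ r.body, Concl.plusDelta a ∈ X
  | .minusDelta q =>
      q ∉ T.facts ∧
      ∀ r ∈ T.rules, r.kind = RuleKind.strict → r.head = q →
        ∃ a ∈ r.body, Concl.minusDelta a ∈ X
  | .plusPartial q =>
      Concl.plusDelta q ∈ X ∨
      ((∃ r ∈ T.rules, r.isSd ∧ r.head = q ∧
          ∀ a ∈ r.body, Concl.plusPartial a ∈ X) ∧
       Concl.minusDelta q.compl ∈ X ∧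
       ∀ s ∈ T.rules, s.head = q.compl →
         ((∃ a ∈ s.body, Concl.minusPartial a ∈ X) ∨
          (∃ t ∈ T.rules, t.isSd ∧ t.head = q ∧ T.sup t s ∧
            ∀ a ∈ t.body, Concl.plusPartial a ∈ X)))
  | .minusPartial q =>
      Concl.minusDelta q ∈ X ∧
      ((∀ r ∈ T.rules, r.isSd → r.head = q →
          ∃ a ∈ r.body, Concl.minusPartial a ∈ X) ∨
       Concl.plusDelta q.compl ∈ X ∨
       (∃ s ∈ T.rules, s.head = q.compl ∧
          (∀ a ∈ s.body, Concl.plusPartial a ∈ X) ∧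
          ∀ t ∈ T.rules, t.isSd → t.head = q →
            ((∃ a ∈ t.body, Concl.minusPartial a ∈ X) ∨ ¬ T.sup t s)))

theorem licensed_iff_infers (T : DTheory Atom) (P : List (Concl Atom)) (c : Concl Atom) :
    Licensed T P c ↔ Infers T {d | d ∈ P} c := by
  cases c <;> rfl

/-- A finite superset of the conclusions that an inference of `c` can refer to. -/
def DTheory.premises (T : DTheory Atom) (c : Concl Atom) : Set (Concl Atom) :=
  Concl.lit ⁻¹' ({c.lit, c.lit.compl} ∪ ⋃ r ∈ T.rules, (r.body : Set (Lit Atom)))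

theorem DTheory.finite_premises (T : DTheory Atom) (c : Concl Atom) : (T.premises c).Finite := by
  refine Set.Finite.preimage' ?_ fun q _ => Concl.finite_lit_preimage_singleton q
  exact (Set.toFinite _).union (T.rules.finite_toSet.biUnion fun r _ => r.body.finite_toSet)

theorem Infers.of_inter_premises_subset {T : DTheory Atom} {X Y : Set (Concl Atom)}
    {c : Concl Atom} (hXY : X ∩ T.premises c ⊆ Y) (h : Infers T X c) : Infers T Y c := by
  have of_lit : ∀ d ∈ X, d.lit = c.lit → d ∈ Y := fun d hd hlit =>
    hXY ⟨hd, Or.inl (Or.inl hlit)⟩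
  have of_compl : ∀ d ∈ X, d.lit = c.lit.compl → d ∈ Y := fun d hd hlit =>
    hXY ⟨hd, Or.inl (Or.inr hlit)⟩
  have of_body : ∀ r ∈ T.rules, ∀ d ∈ X, d.lit ∈ r.body → d ∈ Y := fun r hr d hd hlit =>
    hXY ⟨hd, Or.inr (Set.mem_biUnion hr hlit)⟩
  cases c <;> grind [Infers, Concl.lit]

theorem Infers.mono {T : DTheory Atom} {X Y : Set (Concl Atom)} (hXY : X ⊆ Y) {c : Concl Atom}
    (h : Infers T X c) : Infers T Y c :=
  h.of_inter_premises_subset (Set.inter_subset_left.trans hXY)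

/-- The immediate consequence operator of `T` on sets of conclusions. -/
def DTheory.consequence (T : DTheory Atom) : Set (Concl Atom) →o Set (Concl Atom) where
  toFun X := {c | Infers T X c}
  monotone' _ _ hXY _ h := h.mono hXY

theorem derivation_append_singleton_iff {T : DTheory Atom} {P : List (Concl Atom)}
    {c : Concl Atom} :
    DLDerivation T (P ++ [c]) ↔ DLDerivation T P ∧ Licensed T P c := by
  simp only [DLDerivation, Fin.forall_iff, List.length_append, List.length_singleton,
    List.get_eq_getElem, Nat.forall_lt_succ_right']
  refine and_congr (forall₂_congr fun i hi => ?_) ?_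
  · rw [List.take_append_of_le_length hi.le, List.getElem_append_left hi]
  · simp

theorem DLDerivation.append {T : DTheory Atom} {P Q : List (Concl Atom)}
    (hP : DLDerivation T P) (hQ : DLDerivation T Q) : DLDerivation T (P ++ Q) := by
  induction Q using List.reverseRecOn with
  | nil => simpa using hP
  | append_singleton Q c ih =>
    obtain ⟨hQ, hc⟩ := derivation_append_singleton_iff.1 hQ
    rw [← List.append_assoc, derivation_append_singleton_iff]
    refine ⟨ih hQ, ?_⟩
    rw [licensed_iff_infers] at hc ⊢
    exact hc.mono fun _ => List.mem_append_right P

theorem DLDerivation.mem_lfp {T : DTheory Atom} {P : List (Concl Atom)}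
    (hP : DLDerivation T P) : ∀ c ∈ P, c ∈ T.consequence.lfp := by
  induction P using List.reverseRecOn with
  | nil => simp
  | append_singleton P c ih =>
    obtain ⟨hP, hc⟩ := derivation_append_singleton_iff.1 hP
    have hc_lfp : c ∈ T.consequence.lfp := by
      rw [← T.consequence.map_lfp]
      exact ((licensed_iff_infers T P c).1 hc).mono (ih hP)
    simpa [or_imp, forall_and] using ⟨ih hP, hc_lfp⟩

theorem exists_derivation_of_finite {T : DTheory Atom} {S : Set (Concl Atom)} (hS : S.Finite)
    (hprov : ∀ c ∈ S, DLProves T c) : ∃ P, DLDerivation T P ∧ ∀ c ∈ S, c ∈ P := by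
  induction S, hS using Set.Finite.induction_on with
  | empty => exact ⟨[], fun i => i.elim0, by simp⟩
  | @insert a S _ _ ih =>
    rw [Set.forall_mem_insert] at hprov
    obtain ⟨P, hP, hSP⟩ := ih hprov.2
    obtain ⟨Q, hQ, hlast⟩ := hprov.1
    refine ⟨P ++ Q, hP.append hQ, Set.forall_mem_insert.2 ⟨?_, fun c hc => ?_⟩⟩
    · exact List.mem_append_right P (List.mem_of_getLast? hlast)
    · exact List.mem_append_left Q (hSP c hc)

theorem Infers.dlProves {T : DTheory Atom} {c : Concl Atom}
    (h : Infers T {d | DLProves T d} c) : DLProves T c := by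
  obtain ⟨P, hP, hmem⟩ := exists_derivation_of_finite (T := T)
    ((T.finite_premises c).inter_of_right {d | DLProves T d}) fun _ hd => hd.1
  have hc : Licensed T P c := (licensed_iff_infers T P c).2 (h.of_inter_premises_subset hmem)
  exact ⟨P ++ [c], derivation_append_singleton_iff.2 ⟨hP, hc⟩, List.getLast?_concat⟩

theorem dlProves_iff_mem_lfp {T : DTheory Atom} {c : Concl Atom} :
    DLProves T c ↔ c ∈ T.consequence.lfp := by
  constructor
  · rintro ⟨P, hP, hlast⟩
    exact hP.mem_lfp c (List.mem_of_getLast? hlast)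
  · have hle : T.consequence.lfp ≤ {d | DLProves T d} :=
      T.consequence.lfp_le fun _ => Infers.dlProves
    exact fun hc => hle hc

theorem consequence_dual (T : DTheory Atom) (X : Set (Concl Atom)) :
    T.consequence (Concl.dual X) = Concl.dual (T.consequence X) := by
  ext c
  change Infers T (Concl.dual X) c ↔ ¬ Infers T X c.opposite
  cases c <;> grind [Infers, Concl.dual, Concl.opposite]

theorem lfp_consequence_subset_dual (T : DTheory Atom) :
    T.consequence.lfp ⊆ Concl.dual T.consequence.lfp :=
  T.consequence.lfp_le_fixed <| by rw [consequence_dual, T.consequence.map_lfp]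

theorem kleeneAll_eq_some_false {f : Lit Atom → Option Bool} {S : Finset (Lit Atom)} :
    kleeneAll f S = some false ↔ ∃ a ∈ S, f a = some false := by
  unfold kleeneAll
  split_ifs <;> simp_all

theorem kleeneAll_eq_some_true {f : Lit Atom → Option Bool} {S : Finset (Lit Atom)} :
    kleeneAll f S = some true ↔ ∀ a ∈ S, f a = some true := by
  unfold kleeneAll
  split_ifs <;> grind

namespace DInterp

/-- The set of conclusions that hold in an interpretation. -/
def conclusions (I : DInterp Atom) : Set (Concl Atom) :=
  {c | DLHolds I c}

open Classical in
/-- The interpretation read off from a set of conclusions. The positive tag takes precedence, so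
this is meaningful only for sets that contain no pair of opposite conclusions. -/
noncomputable def ofConclusions (X : Set (Concl Atom)) : DInterp Atom where
  del q := if .plusDelta q ∈ X then some true else if .minusDelta q ∈ X then some false else none
  par q :=
    if .plusPartial q ∈ X then some true else if .minusPartial q ∈ X then some false else none

theorem conclusions_ofConclusions {X : Set (Concl Atom)} (hX : X ⊆ Concl.dual X) :
    (ofConclusions X).conclusions = X := by
  ext c
  have hc : c ∈ X → c.opposite ∉ X := fun h => hX h
  change DLHolds (ofConclusions X) c ↔ c ∈ X
  cases c <;> simp only [ofConclusions, DLHolds, Concl.opposite] at hc ⊢ <;>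
    split_ifs <;> simp_all

end DInterp

theorem modelConditions_iff_isFixedPt {T : DTheory Atom} {I : DInterp Atom} :
    ModelConditions T I ↔ Function.IsFixedPt T.consequence I.conclusions := by
  have isFixedPt_iff : Function.IsFixedPt T.consequence I.conclusions ↔
      ∀ c, DLHolds I c ↔ Infers T I.conclusions c :=
    Set.ext_iff.trans (forall_congr' fun _ => Iff.comm)
  rw [isFixedPt_iff, Concl.forall_iff]
  simp only [ModelConditions, kleeneAll_eq_some_true, kleeneAll_eq_some_false,
    and_comm (b := T.sup _ _)]
  rfl

theorem ModelConditions.coherent {T : DTheory Atom} {I : DInterp Atom}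
    (hI : ModelConditions T I) : I.Coherent :=
  ⟨fun q hq => (hI.2.2.1 q).2 (Or.inl hq), fun q hq => ((hI.2.2.2 q).1 hq).1⟩

theorem isModel_iff_isFixedPt {T : DTheory Atom} {I : DInterp Atom} :
    IsModel T I ↔ Function.IsFixedPt T.consequence I.conclusions :=
  (and_iff_right_of_imp ModelConditions.coherent).trans modelConditions_iff_isFixedPt

theorem DL_minusDelta_char_general (T : DTheory Atom) (c : Concl Atom) :
    DLProves T c ↔ ∀ I : DInterp Atom, IsModel T I → DLHolds I c := by
  rw [dlProves_iff_mem_lfp]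
  constructor
  · intro hc I hI
    exact T.consequence.lfp_le_fixed (isModel_iff_isFixedPt.1 hI) hc
  · intro h
    have hcanon : (DInterp.ofConclusions T.consequence.lfp).conclusions = T.consequence.lfp :=
      DInterp.conclusions_ofConclusions (lfp_consequence_subset_dual T)
    have hmodel : IsModel T (DInterp.ofConclusions T.consequence.lfp) := by
      rw [isModel_iff_isFixedPt, hcanon]
      exact T.consequence.isFixedPt_lfp
    rw [← hcanon]
    exact h _ hmodel

end

/-- Characterization of definite non-provability. -/
theorem DL_minusDelta_char {Atom : Type} [Countable Atom] [DecidableEq Atom]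
    (T : DTheory Atom) (hacyc : SupAcyclic T) (q : Lit Atom) :
    DLProves T (Concl.minusDelta q) ↔
      ∀ I : DInterp Atom, IsModel T I → I.del q = some false :=
  DL_minusDelta_char_general T (Concl.minusDelta q)
end
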